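/- Bi-infinite rewriting strictly extends infinitary rewriting: in the signature with a constant a and a unary symbol C, let →ε = { (C(a), a) }, and let C^ω denote the unique term satisfying C^ω = C(C^ω) (which exists by corecursion). Then C^ω ∞→∞ a, but it is NOT the case that C^ω →→→ a; hence →→→ ⊊ ∞→∞. -/

import Mathlib

open Relation

/-- The polynomial functor of a signature. -/
def Sig {F : Type} (ar : F → ℕ) (X : Type) : PFunctor.{0} :=
  ⟨X ⊕ F, fun a => match a with
    | Sum.inl _ => Empty
    | Sum.inr f => Fin (ar f)⟩

/-- Possibly infinite terms: the final coalgebra (M-type) of the signature functor. -/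
abbrev Tm {F : Type} (ar : F → ℕ) (X : Type) : Type := (Sig ar X).M

/-- The lifting `↓R` of a relation on terms. -/
def lift {F : Type} (ar : F → ℕ) (X : Type) (R : Tm ar X → Tm ar X → Prop) :
    Tm ar X → Tm ar X → Prop := fun s t =>
  s = t ∨ ∃ (f : F) (sa ta : Fin (ar f) → Tm ar X),
    s = PFunctor.M.mk ⟨Sum.inr f, sa⟩ ∧ t = PFunctor.M.mk ⟨Sum.inr f, ta⟩ ∧
    ∀ i, R (sa i) (ta i)

/-- Knaster–Tarski least fixed point. -/
def mu {L : Type*} [CompleteLattice L] (f : L → L) : L := sInf {x | f x ≤ x}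

/-- Knaster–Tarski greatest fixed point. -/
def nu {L : Type*} [CompleteLattice L] (f : L → L) : L := sSup {x | x ≤ f x}

/-- The infinitary rewrite relation `→→→ := μx.νy.((→ε ∪ ↓x)* ∘ ↓y)`. -/
def ired {F X : Type} (ar : F → ℕ) (root : Tm ar X → Tm ar X → Prop) :
    Tm ar X → Tm ar X → Prop :=
  mu (fun x => nu (fun y => Relation.Comp (ReflTransGen (root ⊔ lift ar X x)) (lift ar X y)))

/-- The bi-infinite rewrite relation `∞→∞ := νy.((→ε ∪ ↓y)*)`. -/
def biInf {F X : Type} (ar : F → ℕ) (root : Tm ar X → Tm ar X → Prop) :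
    Tm ar X → Tm ar X → Prop :=
  nu (fun y => ReflTransGen (root ⊔ lift ar X y))

/-- The signature with a constant `a` and a unary symbol `C`. -/
inductive F2 : Type
  | a | C

/-- Arities: `a` is a constant, `C` is unary. -/
def ar2 : F2 → ℕ
  | F2.a => 0
  | F2.C => 1

variable {X : Type}

/-- The constant `a` as a term. -/
def ta (X : Type) : Tm ar2 X := PFunctor.M.mk ⟨Sum.inr F2.a, Fin.elim0⟩

/-- Application of the unary symbol `C`. -/
def CApp (t : Tm ar2 X) : Tm ar2 X := PFunctor.M.mk ⟨Sum.inr F2.C, fun _ => t⟩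

/-- The root-step relation `→ε = { (C(a), a) }`. -/
def root2 (X : Type) : Tm ar2 X → Tm ar2 X → Prop := fun s t =>
  s = CApp (ta X) ∧ t = ta X

/-- The term `C^ω`, obtained by corecursion. -/
def Comega (X : Type) : Tm ar2 X :=
  PFunctor.M.corec (fun _ : Unit => ⟨Sum.inr F2.C, fun _ => ()⟩) ()

/-!
A term without redexes infinitarily rewrites only to itself: in `μx.νy.((→ε ∪ ↓x)* ∘ ↓y)` the
inductive hypothesis on `x` makes the prefix `(→ε ∪ ↓x)*` trivial, so `y`, restricted to normal
forms as sources, is a bisimulation. The term `C^ω` contains no redex, since its only subterm is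
itself and it differs from `C(a)`. In contrast, `∞→∞` lets the infinite nesting precede a root
step: `C^ω = C(C^ω)` rewrites below the root to `C(a)`, coinductively, and then to `a`.
-/

section FixedPoints

variable {L : Type*} [CompleteLattice L] {f : L → L} {x : L}

theorem mu_le (h : f x ≤ x) : mu f ≤ x := sInf_le h

theorem le_nu (h : x ≤ f x) : x ≤ nu f := le_sSup h

theorem nu_le (h : ∀ y, y ≤ f y → y ≤ x) : nu f ≤ x := sSup_le h

theorem nu_le_map (hf : Monotone f) : nu f ≤ f (nu f) :=
  (OrderHom.map_gfp ⟨f, hf⟩).ge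

end FixedPoints

section Rewriting

variable {F : Type} {ar : F → ℕ} {root R : Tm ar X → Tm ar X → Prop} {s t : Tm ar X}

theorem lift_mono : Monotone (lift ar X) := by
  rintro R S hRS s t (rfl | ⟨f, ss, ts, rfl, rfl, hst⟩)
  · exact Or.inl rfl
  · exact Or.inr ⟨f, ss, ts, rfl, rfl, fun i => hRS _ _ (hst i)⟩

theorem eq_of_lift_eq (h : lift ar X Eq s t) : s = t := by
  obtain rfl | ⟨f, ss, ts, rfl, rfl, hst⟩ := h
  · rfl
  · rw [funext hst]

theorem eq_of_le_lift (hR : R ≤ lift ar X R) (h : R s t) : s = t := by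
  refine PFunctor.M.bisim (lift ar X R) ?_ s t (hR s t h)
  rintro s t (rfl | ⟨f, ss, ts, rfl, rfl, hst⟩)
  · exact ⟨s.dest.1, s.dest.2, s.dest.2, rfl, rfl, fun _ => Or.inl rfl⟩
  · exact ⟨Sum.inr f, ss, ts, PFunctor.M.dest_mk _, PFunctor.M.dest_mk _, fun i => hR _ _ (hst i)⟩

theorem monotone_reflTransGen_sup_lift (root : Tm ar X → Tm ar X → Prop) :
    Monotone fun R => ReflTransGen (root ⊔ lift ar X R) :=
  fun _ _ hRS => ReflTransGen.mono (sup_le_sup_left (lift_mono hRS) root)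

theorem ired_le_biInf (root : Tm ar X → Tm ar X → Prop) : ired ar root ≤ biInf ar root := by
  refine mu_le (nu_le fun y hy => le_sup_left.trans (le_nu (x := y ⊔ biInf ar root) ?_))
  have rewrites_mono := monotone_reflTransGen_sup_lift root
  rintro s t (hst | hst)
  · obtain ⟨u, hsu, hut⟩ := hy s t hst
    exact (rewrites_mono le_sup_right s u hsu).tail (Or.inr (lift_mono le_sup_left u t hut))
  · exact rewrites_mono le_sup_right s t (nu_le_map rewrites_mono s t hst)

/-- `ImmediateSubterm u s` means that `u` is one of the arguments of the root symbol of `s`;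
its reflexive-transitive closure is the subterm relation. -/
def ImmediateSubterm (u s : Tm ar X) : Prop :=
  ∃ (f : F) (ss : Fin (ar f) → Tm ar X) (i : Fin (ar f)),
    s = PFunctor.M.mk ⟨Sum.inr f, ss⟩ ∧ u = ss i

/-- Normal forms with respect to the root steps `root`: no subterm is the source of a root step. -/
def IsNormalForm (root : Tm ar X → Tm ar X → Prop) (s : Tm ar X) : Prop :=
  ∀ u, ReflTransGen ImmediateSubterm u s → ∀ v, ¬ root u v

namespace IsNormalForm

theorem immediateSubterm {u : Tm ar X} (hs : IsNormalForm root s) (hu : ImmediateSubterm u s) :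
    IsNormalForm root u :=
  fun v hv => hs v (hv.tail hu)

theorem lift_restrict (hs : IsNormalForm root s) (h : lift ar X R s t) :
    lift ar X (fun u v => IsNormalForm root u ∧ R u v) s t := by
  obtain rfl | ⟨f, ss, ts, rfl, rfl, hst⟩ := h
  · exact Or.inl rfl
  · exact Or.inr ⟨f, ss, ts, rfl, rfl,
      fun i => ⟨hs.immediateSubterm ⟨f, ss, i, rfl, rfl⟩, hst i⟩⟩

theorem eq_of_reflTransGen (hR : ∀ u v, IsNormalForm root u → R u v → u = v)
    (hs : IsNormalForm root s) (h : ReflTransGen (root ⊔ lift ar X R) s t) : s = t := by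
  induction h with
  | refl => rfl
  | @tail u v _ huv hsu =>
    subst hsu
    obtain hroot | hlift := huv
    · exact (hs s .refl v hroot).elim
    · have arguments_eq : lift ar X Eq s v :=
        lift_mono (fun p q hpq => hR p q hpq.1 hpq.2) s v (hs.lift_restrict hlift)
      exact eq_of_lift_eq arguments_eq

theorem eq_of_ired (hs : IsNormalForm root s) (h : ired ar root s t) : s = t := by
  suffices ired ar root ≤ fun u v => IsNormalForm root u → u = v from this s t h hs
  refine mu_le (nu_le fun y hy u v huv hu => ?_)
  refine eq_of_le_lift (R := fun u v => IsNormalForm root u ∧ y u v) ?_ ⟨hu, huv⟩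
  rintro u v ⟨hu, huv⟩
  obtain ⟨w, huw, hwv⟩ := hy u v huv
  obtain rfl : u = w := hu.eq_of_reflTransGen (fun _ _ hp hpq => hpq hp) huw
  exact hu.lift_restrict hwv

end IsNormalForm

end Rewriting

theorem CApp_injective : Function.Injective (CApp (X := X)) := fun _ _ h =>
  congrFun (eq_of_heq (Sigma.mk.inj (PFunctor.M.mk_inj h)).2) (0 : Fin 1)

theorem CApp_ne_ta (s : Tm ar2 X) : CApp s ≠ ta X := fun h =>
  nomatch (Sigma.mk.inj (PFunctor.M.mk_inj h)).1

theorem Comega_eq_CApp (X : Type) : Comega X = CApp (Comega X) :=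
  PFunctor.M.corec_def (F := Sig ar2 X) _ ()

theorem eq_Comega_of_eq_CApp {u : Tm ar2 X} (hu : u = CApp u) : u = Comega X :=
  congrFun (PFunctor.M.corec_unique (P := Sig ar2 X) (fun _ => ⟨Sum.inr F2.C, fun _ => ()⟩)
    (fun _ : Unit => u) fun _ => (congrArg PFunctor.M.dest hu).trans (PFunctor.M.dest_mk _)) ()

theorem Comega_ne_ta (X : Type) : Comega X ≠ ta X :=
  Comega_eq_CApp X ▸ CApp_ne_ta (Comega X)

theorem eq_Comega_of_immediateSubterm {u : Tm ar2 X} (h : ImmediateSubterm u (Comega X)) :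
    u = Comega X := by
  obtain ⟨f, ss, i, hss, rfl⟩ := h
  rw [Comega_eq_CApp] at hss
  cases PFunctor.M.mk_inj hss
  rfl

theorem eq_Comega_of_subterm {u : Tm ar2 X} (h : ReflTransGen ImmediateSubterm u (Comega X)) :
    u = Comega X := by
  induction h using ReflTransGen.head_induction_on with
  | refl => rfl
  | head hsub _ ih => exact eq_Comega_of_immediateSubterm (ih ▸ hsub)

theorem isNormalForm_Comega (X : Type) : IsNormalForm (root2 X) (Comega X) := by
  rintro u hu v ⟨hredex, -⟩
  rw [eq_Comega_of_subterm hu, Comega_eq_CApp] at hredex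
  exact Comega_ne_ta X (CApp_injective hredex)

theorem lift_CApp {R : Tm ar2 X → Tm ar2 X → Prop} {s t : Tm ar2 X} (h : R s t) :
    lift ar2 X R (CApp s) (CApp t) :=
  Or.inr ⟨F2.C, fun _ => s, fun _ => t, rfl, rfl, fun _ => h⟩

theorem biInf_Comega_ta (X : Type) : biInf ar2 (root2 X) (Comega X) (ta X) := by
  suffices (fun s t => s = Comega X ∧ t = ta X) ≤ biInf ar2 (root2 X) from this _ _ ⟨rfl, rfl⟩
  refine le_nu ?_
  rintro _ _ ⟨rfl, rfl⟩
  have below_root : lift ar2 X (fun s t => s = Comega X ∧ t = ta X) (Comega X) (CApp (ta X)) := by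
    conv_lhs => rw [Comega_eq_CApp]
    exact lift_CApp ⟨rfl, rfl⟩
  have at_root : root2 X (CApp (ta X)) (ta X) := ⟨rfl, rfl⟩
  exact .head (Or.inr below_root) (.single (Or.inl at_root))

theorem not_ired_Comega_ta (X : Type) : ¬ ired ar2 (root2 X) (Comega X) (ta X) := fun h =>
  Comega_ne_ta X ((isNormalForm_Comega X).eq_of_ired h)

/-- `C^ω` satisfies its defining equation and is the unique such term;
`C^ω ∞→∞ a`, but not `C^ω →→→ a`; hence `→→→` is strictly contained in `∞→∞`. -/
theorem ired_strictly_below_biInf (X : Type) :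
    (Comega X = CApp (Comega X) ∧ ∀ u : Tm ar2 X, u = CApp u → u = Comega X) ∧
    biInf ar2 (root2 X) (Comega X) (ta X) ∧
    ¬ ired ar2 (root2 X) (Comega X) (ta X) ∧
    ired ar2 (root2 X) < biInf ar2 (root2 X) := by
  have strict : ired ar2 (root2 X) < biInf ar2 (root2 X) :=
    lt_of_le_not_ge (ired_le_biInf (root2 X))
      fun h => not_ired_Comega_ta X (h _ _ (biInf_Comega_ta X))
  exact ⟨⟨Comega_eq_CApp X, fun _ => eq_Comega_of_eq_CApp⟩, biInf_Comega_ta X,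
    not_ired_Comega_ta X, strict⟩
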